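/- arXiv:2411.11208 — 3 statements merged into one kernel-verified Lean document; each statement's English description precedes it below -/
import Mathlib

section
/- Let w be a permutation of {1,…,n} with permutation matrix P (P_{ij} = 1 if i = w(j), else 0), let D be a diagonal n×n matrix, and let b ∈ B₋, c ∈ B₊. Set X = bPc⁻¹ and Y = cP⁻¹Db⁻¹. Then (X,Y) lies in the lower-upper scheme E (i.e., XY is lower triangular and YX is upper triangular); moreover (XY)_{ii} = D_{ii} and (YX)_{ii} = D_{w(i),w(i)} for all i, so the diagonal of XY is obtained from the diagonal of YX by applying the permutation w. -/
/-- `M` is lower triangular. -/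
def LowerTri {n : ℕ} {K : Type*} [CommRing K] (M : Matrix (Fin n) (Fin n) K) : Prop :=
  ∀ i j : Fin n, i < j → M i j = 0

/-- `M` is upper triangular. -/
def UpperTri {n : ℕ} {K : Type*} [CommRing K] (M : Matrix (Fin n) (Fin n) K) : Prop :=
  ∀ i j : Fin n, j < i → M i j = 0

/-- The permutation matrix of `w`: `P i j = 1` iff `i = w j`. -/
def permMat {n : ℕ} (K : Type*) [CommRing K] (w : Equiv.Perm (Fin n)) :
    Matrix (Fin n) (Fin n) K :=
  fun i j => if i = w j then 1 else 0

/-!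
Cancelling `c⁻¹ c` and `b⁻¹ b` gives `XY = b D b⁻¹` and `YX = c (P⁻¹ D P) c⁻¹`, and `P⁻¹ D P` has
entries `D (w i) (w j)`. Since taking the diagonal is multiplicative on triangular matrices,
conjugating a triangular matrix by an invertible triangular matrix of the same kind keeps both the
triangular shape and the diagonal.
-/

section BlockTriangular

open Matrix

variable {m α : Type*} [Fintype m] [LinearOrder α] {f : m → α}

theorem blockTriangular_mul_apply_self {R : Type*} [NonUnitalNonAssocSemiring R]
    {M N : Matrix m m R} (hf : Function.Injective f) (hM : M.BlockTriangular f)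
    (hN : N.BlockTriangular f) (i : m) : (M * N) i i = M i i * N i i := by
  rw [mul_apply]
  refine Fintype.sum_eq_single i fun j hji => ?_
  rcases (hf.ne hji).lt_or_gt with hlt | hgt
  · rw [hM hlt, zero_mul]
  · rw [hN hgt, mul_zero]

variable {R : Type*} [CommRing R] [DecidableEq m] {M N : Matrix m m R} [Invertible M]

theorem blockTriangular_conj (hM : M.BlockTriangular f) (hN : N.BlockTriangular f) :
    (M * N * M⁻¹).BlockTriangular f :=
  (hM.mul hN).mul (blockTriangular_inv_of_blockTriangular hM)

theorem blockTriangular_conj_apply_self (hf : Function.Injective f) (hM : M.BlockTriangular f)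
    (hN : N.BlockTriangular f) (i : m) : (M * N * M⁻¹) i i = N i i := by
  have hM' : M⁻¹.BlockTriangular f := blockTriangular_inv_of_blockTriangular hM
  calc (M * N * M⁻¹) i i = M i i * N i i * M⁻¹ i i := by
        rw [blockTriangular_mul_apply_self hf (hM.mul hN) hM',
          blockTriangular_mul_apply_self hf hM hN]
    _ = N i i * (M i i * M⁻¹ i i) := by ring
    _ = N i i := by
        rw [← blockTriangular_mul_apply_self hf hM hM', mul_inv_of_invertible, one_apply_eq,
          mul_one]

end BlockTriangular

section Fin

variable {n : ℕ} {K : Type*} [CommRing K]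

theorem lowerTri_iff_isLowerTriangular {M : Matrix (Fin n) (Fin n) K} :
    LowerTri M ↔ M.IsLowerTriangular :=
  Iff.rfl

theorem upperTri_iff_isUpperTriangular {M : Matrix (Fin n) (Fin n) K} :
    UpperTri M ↔ M.IsUpperTriangular :=
  Iff.rfl

-- `Equiv.Perm.permMatrix K σ` has its ones at the entries `(i, σ i)`, hence the inverse.
theorem permMat_eq_permMatrix_inv (w : Equiv.Perm (Fin n)) :
    permMat K w = (w⁻¹).permMatrix K := by
  ext i j
  simp [permMat, Equiv.toPEquiv_apply, PEquiv.toMatrix_apply, Equiv.symm_apply_eq]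

theorem permMat_mul_permMat_inv (w : Equiv.Perm (Fin n)) :
    permMat K w * permMat K w⁻¹ = 1 := by
  rw [permMat_eq_permMatrix_inv, permMat_eq_permMatrix_inv, ← Matrix.permMatrix_mul,
    inv_mul_cancel, Matrix.permMatrix_one]

theorem permMat_inv_mul_mul_permMat (w : Equiv.Perm (Fin n)) (A : Matrix (Fin n) (Fin n) K) :
    permMat K w⁻¹ * A * permMat K w = A.submatrix w w := by
  rw [permMat_eq_permMatrix_inv, permMat_eq_permMatrix_inv, inv_inv,
    PEquiv.toMatrix_toPEquiv_mul, PEquiv.mul_toMatrix_toPEquiv, Matrix.submatrix_submatrix]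
  rfl

end Fin

theorem statement11_general {n : ℕ} {K : Type*} [CommRing K]
    (w : Equiv.Perm (Fin n)) (D b c : Matrix (Fin n) (Fin n) K)
    (hDL : LowerTri D) (hDU : UpperTri (D.submatrix w w))
    (hbL : LowerTri b) (hb : IsUnit b) (hcU : UpperTri c) (hc : IsUnit c)
    (X Y : Matrix (Fin n) (Fin n) K)
    (hX : X = b * permMat K w * c⁻¹)
    (hY : Y = c * permMat K w⁻¹ * D * b⁻¹) :
    LowerTri (X * Y) ∧ UpperTri (Y * X) ∧
    (∀ i : Fin n, (X * Y) i i = D i i) ∧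
    (∀ i : Fin n, (Y * X) i i = D (w i) (w i)) ∧
    (∀ i : Fin n, (Y * X) i i = (X * Y) (w i) (w i)) := by
  have := hb.invertible
  have := hc.invertible
  have hXY : X * Y = b * D * b⁻¹ := by
    calc X * Y = b * (permMat K w * permMat K w⁻¹) * D * b⁻¹ := by
          simp only [hX, hY, Matrix.mul_assoc, Matrix.inv_mul_cancel_left_of_invertible]
      _ = b * D * b⁻¹ := by rw [permMat_mul_permMat_inv, Matrix.mul_one]
  have hYX : Y * X = c * D.submatrix w w * c⁻¹ := by
    rw [← permMat_inv_mul_mul_permMat]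
    simp only [hX, hY, Matrix.mul_assoc, Matrix.inv_mul_cancel_left_of_invertible]
  rw [lowerTri_iff_isLowerTriangular] at hDL hbL
  rw [upperTri_iff_isUpperTriangular] at hDU hcU
  have hXYdiag : ∀ i, (X * Y) i i = D i i := fun i => by
    rw [hXY, blockTriangular_conj_apply_self OrderDual.toDual.injective hbL hDL]
  have hYXdiag : ∀ i, (Y * X) i i = D (w i) (w i) := fun i => by
    rw [hYX, blockTriangular_conj_apply_self Function.injective_id hcU hDU, Matrix.submatrix_apply]
  refine ⟨?_, ?_, hXYdiag, hYXdiag, fun i => (hYXdiag i).trans (hXYdiag (w i)).symm⟩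
  · rw [hXY, lowerTri_iff_isLowerTriangular]
    exact blockTriangular_conj hbL hDL
  · rw [hYX, upperTri_iff_isUpperTriangular]
    exact blockTriangular_conj hcU hDU

theorem statement11 {n : ℕ} (hn : 1 ≤ n) {K : Type*} [Field K]
    (w : Equiv.Perm (Fin n)) (D b c : Matrix (Fin n) (Fin n) K)
    (hD : ∀ i j : Fin n, i ≠ j → D i j = 0)
    (hbL : LowerTri b) (hb : IsUnit b) (hcU : UpperTri c) (hc : IsUnit c)
    (X Y : Matrix (Fin n) (Fin n) K)
    (hX : X = b * permMat K w * c⁻¹)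
    -- `permMat K w⁻¹` is the inverse `P⁻¹` of the permutation matrix `P` of `w`
    (hY : Y = c * permMat K w⁻¹ * D * b⁻¹) :
    LowerTri (X * Y) ∧ UpperTri (Y * X) ∧
    (∀ i : Fin n, (X * Y) i i = D i i) ∧
    (∀ i : Fin n, (Y * X) i i = D (w i) (w i)) ∧
    (∀ i : Fin n, (Y * X) i i = (X * Y) (w i) (w i)) :=
  statement11_general w D b c (fun i j hij => hD i j hij.ne)
    (fun i j hji => hD (w i) (w j) (w.injective.ne hji.ne')) hbL hb hcU hc X Y hX hY
end

section
/- Fix n ≥ 1 and let Q = (q₁,…,q_m) and Q′ = (q′₁,…,q′_{m′}) be two words with entries in {1,…,n−1} whose products of adjacent transpositions are equal: s_{q₁}⋯s_{q_m} = s_{q′₁}⋯s_{q′_{m′}} = v in the symmetric group S_n. Then for every w ∈ S_n, the rational function Σ over subsets I ⊆ {1,…,m} with Π_{i∈I} s_{q_i} = w (product taken in increasing order of i) of Π_{i∈I} β_i/(1+β_i) · Π_{i∉I} 1/(1+β_i), computed from Q, equals the corresponding sum computed from Q′, as elements of the field ℚ(x₁,…,xₙ). (Both equal the restriction of the Segre–Schwartz–MacPherson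 class of the opposite Bruhat cell of w at the fixed point v.) -/
open scoped Classical

noncomputable section

namespace AJSBilleySSM

/-- The adjacent transposition `s_k` exchanging `k` and `k+1` (0-indexed). -/
def adjSwap {n : ℕ} (k : Fin n) (h : (k : ℕ) + 1 < n) : Equiv.Perm (Fin n) :=
  Equiv.swap k ⟨(k : ℕ) + 1, h⟩

variable {n m : ℕ}

/-- The letters of the word `q`, as adjacent transpositions. -/
def wordPerm (q : Fin m → Fin n) (hq : ∀ i, (q i : ℕ) + 1 < n) (i : Fin m) :
    Equiv.Perm (Fin n) :=
  adjSwap (q i) (hq i)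

/-- `σ_k`, the product of the first `k` letters of the word `q` (so `σ_0 = 1`). -/
def partialProd (q : Fin m → Fin n) (hq : ∀ i, (q i : ℕ) + 1 < n) (k : ℕ) :
    Equiv.Perm (Fin n) :=
  ((List.ofFn (wordPerm q hq)).take k).prod

/-- The product of the whole word `q`. -/
def wordProd (q : Fin m → Fin n) (hq : ∀ i, (q i : ℕ) + 1 < n) : Equiv.Perm (Fin n) :=
  (List.ofFn (wordPerm q hq)).prod

/-- The root `β_i = x_{σ_{i-1}(q_i)} - x_{σ_{i-1}(q_i + 1)}` attached to the `i`-th letter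
of the word `q` (everything 0-indexed, so `σ_{i-1}` is the product of the letters before
the `i`-th one). -/
def beta (R : Type*) [CommRing R] (q : Fin m → Fin n) (hq : ∀ i, (q i : ℕ) + 1 < n)
    (i : Fin m) : MvPolynomial (Fin n) R :=
  MvPolynomial.X (partialProd q hq i (q i)) -
    MvPolynomial.X (partialProd q hq i ⟨(q i : ℕ) + 1, hq i⟩)

/-- The product `Π_{i ∈ I} s_{q_i}`, taken in increasing order of `i`. -/
def subwordProd (q : Fin m → Fin n) (hq : ∀ i, (q i : ℕ) + 1 < n) (I : Finset (Fin m)) :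
    Equiv.Perm (Fin n) :=
  (((List.finRange m).filter (fun i => decide (i ∈ I))).map (wordPerm q hq)).prod

/-- The image of `β_i` in the field of rational functions `ℚ(x₁,…,xₙ)`. -/
def betaF (q : Fin m → Fin n) (hq : ∀ i, (q i : ℕ) + 1 < n) (i : Fin m) :
    FractionRing (MvPolynomial (Fin n) ℚ) :=
  algebraMap (MvPolynomial (Fin n) ℚ) (FractionRing (MvPolynomial (Fin n) ℚ)) (beta ℚ q hq i)

/-- The AJS/Billey-type sum computing `ssm(X_w^∘)|_v` from a word `q` for `v`:
`Σ_{I : Π_{i∈I} s_{q_i} = w} Π_{i∈I} β_i/(1+β_i) · Π_{i∉I} 1/(1+β_i)`. -/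
def ssmSum (q : Fin m → Fin n) (hq : ∀ i, (q i : ℕ) + 1 < n) (w : Equiv.Perm (Fin n)) :
    FractionRing (MvPolynomial (Fin n) ℚ) :=
  ∑ I ∈ Finset.univ.filter (fun I : Finset (Fin m) => subwordProd q hq I = w),
    (∏ i ∈ I, betaF q hq i / (1 + betaF q hq i)) * ∏ i ∈ Iᶜ, (1 + betaF q hq i)⁻¹

/-!
Put `R(a, s) = (1 + a s) / (1 + a)`. Then `ssmSum` is the coefficient of `w` in the product
`R(β₁, s_{q₁}) ⋯ R(β_m, s_{q_m})` in the group algebra of `S_n`. Reading `R(β_i, s_{q_i})` as the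
weight of the edge `σ_{i-1} → σ_i` of the Cayley graph of `S_n`, this product is the weight of a
path from `1` to `v`. It depends on the endpoints only: unitarity `R(a, s) R(-a, s) = 1` and the
Yang–Baxter equation for `R` say that the weighted edges satisfy the Coxeter relations, and these
present `S_n`. The presentation follows from the coset normal form: modulo the Coxeter relations a
word in `s₀, …, s_N` is a word in `s₀, …, s_{N-1}` followed by a descending run `s_N s_{N-1} ⋯ s_k`,
where `k` is the preimage of `N + 1` under the permutation.
-/

section CoxeterRelations

variable {M : Type*} [Monoid M] {g : ℕ → M} {N : ℕ}

/-- The relations of the type `A` Coxeter group with generators `g 0, …, g (N - 1)`, imposed on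
elements of a monoid. -/
structure CoxeterRelations (g : ℕ → M) (N : ℕ) : Prop where
  mul_self : ∀ i < N, g i * g i = 1
  commute : ∀ i j, i + 1 < j → j < N → Commute (g i) (g j)
  braid : ∀ i, i + 1 < N → g i * g (i + 1) * g i = g (i + 1) * g i * g (i + 1)

lemma CoxeterRelations.of_succ (H : CoxeterRelations g (N + 1)) : CoxeterRelations g N where
  mul_self i hi := H.mul_self i (by lia)
  commute i j hij hj := H.commute i j hij (by lia)
  braid i hi := H.braid i (by lia)

/-- The standard parabolic submonoid generated by `g 0, …, g (N - 1)`. -/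
def parabolic (g : ℕ → M) (N : ℕ) : Submonoid M :=
  Submonoid.closure (g '' Set.Iio N)

lemma parabolic_zero (g : ℕ → M) : parabolic g 0 = ⊥ := by
  simp [parabolic]

lemma mem_parabolic {i : ℕ} (hi : i < N) : g i ∈ parabolic g N :=
  Submonoid.subset_closure ⟨i, hi, rfl⟩

/-- The descending run `g (k + d - 1) * ⋯ * g (k + 1) * g k` of length `d`; for `k + d = N + 1`
these represent the cosets of `parabolic g N` in `parabolic g (N + 1)`. -/
def descProd (g : ℕ → M) (k : ℕ) : ℕ → M
  | 0 => 1
  | d + 1 => g (k + d) * descProd g k d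

lemma descProd_succ_right (g : ℕ → M) (k d : ℕ) :
    descProd g k (d + 1) = descProd g (k + 1) d * g k := by
  induction d with
  | zero => simp [descProd]
  | succ d ih => rw [descProd, ih, descProd, mul_assoc, show k + (d + 1) = k + 1 + d by ring]

lemma commute_descProd {k d : ℕ} {a : M} (h : ∀ i, k ≤ i → i < k + d → Commute (g i) a) :
    Commute (descProd g k d) a := by
  induction d with
  | zero => exact Commute.one_left a
  | succ d ih =>
    exact (h (k + d) (by lia) (by lia)).mul_left (ih fun i hki hid => h i hki (by lia))

lemma CoxeterRelations.descProd_mul_succ (H : CoxeterRelations g N) {k d j : ℕ}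
    (hd : k + d ≤ N) (hkj : k ≤ j) (hj : j + 1 < k + d) :
    descProd g k d * g (j + 1) = g j * descProd g k d := by
  induction d with
  | zero => lia
  | succ d ih =>
    rcases (show j + 1 ≤ k + d by lia).lt_or_eq with hlt | htop
    · calc g (k + d) * descProd g k d * g (j + 1)
          = g (k + d) * g j * descProd g k d := by rw [mul_assoc, ih (by lia) hlt, mul_assoc]
        _ = g j * (g (k + d) * descProd g k d) := by
          rw [← (H.commute j (k + d) (by lia) (by lia)).eq, mul_assoc]
    · obtain ⟨e, rfl⟩ : ∃ e, d = e + 1 := ⟨d - 1, by lia⟩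
      obtain rfl : j = k + e := by lia
      have lower_commute : Commute (descProd g k e) (g (k + e + 1)) :=
        commute_descProd fun i _ hi => H.commute i _ (by lia) (by lia)
      calc g (k + e + 1) * (g (k + e) * descProd g k e) * g (k + e + 1)
          = g (k + e + 1) * g (k + e) * g (k + e + 1) * descProd g k e := by
            simp only [mul_assoc, lower_commute.eq]
        _ = g (k + e) * (g (k + e + 1) * (g (k + e) * descProd g k e)) := by
            simp only [← H.braid (k + e) (by lia), mul_assoc]

lemma CoxeterRelations.exists_descProd_mul_eq (H : CoxeterRelations g (N + 1)) {k d j : ℕ}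
    (hkd : k + d = N + 1) (hj : j < N + 1) :
    ∃ y ∈ parabolic g N, ∃ k' d', k' + d' = N + 1 ∧
      descProd g k d * g j = y * descProd g k' d' := by
  rcases lt_trichotomy j k with hlt | rfl | hgt
  · rcases (Nat.succ_le_of_lt hlt).lt_or_eq with hfar | rfl
    · have hcomm : Commute (descProd g k d) (g j) :=
        commute_descProd fun i hki _ => (H.commute j i (by lia) (by lia)).symm
      exact ⟨g j, mem_parabolic (by lia), k, d, hkd, hcomm.eq⟩
    · exact ⟨1, one_mem _, j, d + 1, by lia, by rw [descProd_succ_right, one_mul]⟩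
  · obtain ⟨d, rfl⟩ : ∃ e, d = e + 1 := ⟨d - 1, by lia⟩
    refine ⟨1, one_mem _, j + 1, d, by lia, ?_⟩
    rw [descProd_succ_right, mul_assoc, H.mul_self j hj, mul_one, one_mul]
  · obtain ⟨j, rfl⟩ : ∃ i, j = i + 1 := ⟨j - 1, by lia⟩
    exact ⟨g j, mem_parabolic (by lia), k, d, hkd,
      H.descProd_mul_succ hkd.le (by lia) (by lia)⟩

lemma CoxeterRelations.exists_eq_mul_descProd (H : CoxeterRelations g (N + 1)) {x : M}
    (hx : x ∈ parabolic g (N + 1)) :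
    ∃ y ∈ parabolic g N, ∃ k d, k + d = N + 1 ∧ x = y * descProd g k d := by
  induction hx using Submonoid.closure_induction_right with
  | one => exact ⟨1, one_mem _, N + 1, 0, rfl, (one_mul 1).symm⟩
  | mul_right x _ _ hletter ih =>
    obtain ⟨j, hj, rfl⟩ := hletter
    obtain ⟨y, hy, k, d, hkd, rfl⟩ := ih
    obtain ⟨z, hz, k', d', hkd', hmul⟩ := H.exists_descProd_mul_eq hkd hj
    exact ⟨y * z, mul_mem hy hz, k', d', hkd', by rw [mul_assoc, hmul, mul_assoc]⟩

section Perm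

variable {α : Type*} [DecidableEq α] {e : ℕ → α} {φ : M →* Equiv.Perm α}

lemma map_descProd_apply (hφ : ∀ i, i < N → φ (g i) = Equiv.swap (e i) (e (i + 1))) {k d : ℕ}
    (hkd : k + d ≤ N) : φ (descProd g k d) (e k) = e (k + d) := by
  induction d with
  | zero => simp [descProd]
  | succ d ih =>
    rw [descProd, map_mul, Equiv.Perm.mul_apply, ih (by lia), hφ _ (by lia),
      Equiv.swap_apply_left, add_assoc]

lemma map_apply_of_mem_parabolic (he : Set.InjOn e (Set.Iic (N + 1)))
    (hφ : ∀ i, i < N → φ (g i) = Equiv.swap (e i) (e (i + 1))) {x : M}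
    (hx : x ∈ parabolic g N) : φ x (e (N + 1)) = e (N + 1) := by
  have hle : parabolic g N ≤
      (MulAction.stabilizerSubmonoid (Equiv.Perm α) (e (N + 1))).comap φ := by
    refine (Submonoid.closure_le).2 ?_
    rintro _ ⟨i, hi : i < N, rfl⟩
    have hne : ∀ l ≤ N, e (N + 1) ≠ e l := fun l hl h =>
      absurd (he (Set.mem_Iic.2 le_rfl) (Set.mem_Iic.2 (by lia)) h) (by lia)
    change φ (g i) (e (N + 1)) = e (N + 1)
    rw [hφ i hi, Equiv.swap_apply_of_ne_of_ne (hne i (by lia)) (hne (i + 1) (by lia))]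
  exact hle hx

theorem CoxeterRelations.injOn_parabolic (H : CoxeterRelations g N)
    (he : Set.InjOn e (Set.Iic N))
    (hφ : ∀ i, i < N → φ (g i) = Equiv.swap (e i) (e (i + 1))) :
    Set.InjOn φ (parabolic g N) := by
  induction N with
  | zero =>
    rw [parabolic_zero, Submonoid.coe_bot]
    exact Set.injOn_singleton φ 1
  | succ N ih =>
    intro x hx y hy hxy
    have hφN : ∀ i, i < N → φ (g i) = Equiv.swap (e i) (e (i + 1)) := fun i hi => hφ i (by lia)
    obtain ⟨a, ha, k, d, hkd, rfl⟩ := H.exists_eq_mul_descProd hx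
    obtain ⟨b, hb, l, d', hld', rfl⟩ := H.exists_eq_mul_descProd hy
    have hk : φ (a * descProd g k d) (e k) = e (N + 1) := by
      rw [map_mul, Equiv.Perm.mul_apply, map_descProd_apply hφ hkd.le, hkd,
        map_apply_of_mem_parabolic he hφN ha]
    have hl : φ (b * descProd g l d') (e l) = e (N + 1) := by
      rw [map_mul, Equiv.Perm.mul_apply, map_descProd_apply hφ hld'.le, hld',
        map_apply_of_mem_parabolic he hφN hb]
    obtain rfl : k = l :=
      he (Set.mem_Iic.2 (by lia)) (Set.mem_Iic.2 (by lia))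
        ((φ (a * descProd g k d)).injective (by rw [hk, hxy, hl]))
    obtain rfl : d = d' := by lia
    rw [map_mul, map_mul, mul_left_inj] at hxy
    rw [ih H.of_succ (he.mono (Set.Iic_subset_Iic.2 N.le_succ)) hφN ha hb hxy]

end Perm

end CoxeterRelations

section RMatrix

variable {F A : Type*} [Field F] [Ring A] [Algebra F A]

/-- The rational R-matrix `(1 + a s) / (1 + a)`. It is written as a combination of `s` and `1`
whose coefficients are the weights of a letter inside and outside a subword. -/
def rMatrix (a : F) (s : A) : A :=
  (a / (1 + a)) • s + (1 + a)⁻¹ • 1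

lemma rMatrix_eq_smul (a : F) (s : A) : rMatrix a s = (1 + a)⁻¹ • (1 + a • s) := by
  rw [rMatrix, smul_add, smul_smul, div_eq_inv_mul, add_comm]

lemma rMatrix_mul_rMatrix_neg {a : F} {s : A} (hs : s * s = 1) (ha : 1 + a ≠ 0)
    (ha' : 1 + -a ≠ 0) : rMatrix a s * rMatrix (-a) s = 1 := by
  have hnum : (1 + a • s) * (1 + -a • s) = ((1 + a) * (1 + -a)) • (1 : A) := by
    simp only [mul_add, add_mul, mul_one, one_mul, smul_mul_smul_comm, hs]
    module
  rw [rMatrix_eq_smul, rMatrix_eq_smul, smul_mul_smul_comm, hnum, smul_smul, ← mul_inv,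
    inv_mul_cancel₀ (mul_ne_zero ha ha'), one_smul]

lemma rMatrix_commute (a b : F) {s t : A} (h : Commute s t) :
    Commute (rMatrix a s) (rMatrix b t) := by
  have hs : Commute s (rMatrix b t) :=
    (h.smul_right _).add_right ((Commute.one_right s).smul_right _)
  exact (hs.smul_left _).add_left ((Commute.one_left _).smul_left _)

lemma rMatrix_yangBaxter (a b : F) {s t : A} (hst : s * s = t * t)
    (hbraid : s * t * s = t * s * t) :
    rMatrix a s * rMatrix (a + b) t * rMatrix b s =
      rMatrix b t * rMatrix (a + b) s * rMatrix a t := by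
  have hnum : (1 + a • s) * (1 + (a + b) • t) * (1 + b • s) =
      (1 + b • t) * (1 + (a + b) • s) * (1 + a • t) := by
    simp only [mul_add, add_mul, mul_one, one_mul, smul_mul_smul_comm, hst, hbraid]
    module
  simp only [rMatrix_eq_smul, smul_mul_smul_comm, hnum]
  congr 1
  ring

lemma prod_ofFn_rMatrix {m : ℕ} (b : Fin m → F) (s : Fin m → A) :
    (List.ofFn fun i => rMatrix (b i) (s i)).prod =
      ∑ I : Finset (Fin m), ((∏ i ∈ I, b i / (1 + b i)) * ∏ i ∈ Iᶜ, (1 + b i)⁻¹) •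
        (((List.finRange m).filter (· ∈ I)).map s).prod := by
  have expand := (MultilinearMap.mkPiAlgebraFin F m A).map_add_univ
    (fun i => (b i / (1 + b i)) • s i) (fun i => (1 + b i)⁻¹ • 1)
  rw [MultilinearMap.mkPiAlgebraFin_apply] at expand
  refine expand.trans (Finset.sum_congr rfl fun I _ => ?_)
  have split_scalars : I.piecewise (fun i => (b i / (1 + b i)) • s i) (fun i => (1 + b i)⁻¹ • 1) =
      fun i => I.piecewise (fun i => b i / (1 + b i)) (fun i => (1 + b i)⁻¹) i •
        I.piecewise s 1 i := by
    ext i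
    by_cases hi : i ∈ I <;> simp [hi]
  have subword : (List.ofFn (I.piecewise s 1)).prod =
      (((List.finRange m).filter (· ∈ I)).map s).prod := by
    rw [List.ofFn_eq_map]
    induction List.finRange m with
    | nil => rfl
    | cons i L ih => by_cases hi : i ∈ I <;> simp [hi, ih]
  rw [split_scalars, MultilinearMap.map_smul_univ, MultilinearMap.mkPiAlgebraFin_apply, subword,
    Finset.prod_piecewise, Finset.univ_inter, Finset.compl_eq_univ_sdiff]

lemma coeff_prod_ofFn_rMatrix_of {G : Type*} [Monoid G] [DecidableEq G] {m : ℕ} (b : Fin m → F)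
    (s : Fin m → G) (w : G) :
    (List.ofFn fun i => rMatrix (b i) (MonoidAlgebra.of F G (s i))).prod.coeff w =
      ∑ I : Finset (Fin m) with (((List.finRange m).filter (· ∈ I)).map s).prod = w,
        (∏ i ∈ I, b i / (1 + b i)) * ∏ i ∈ Iᶜ, (1 + b i)⁻¹ := by
  have of_subword (I : Finset (Fin m)) :
      (((List.finRange m).filter (· ∈ I)).map fun i => MonoidAlgebra.of F G (s i)).prod =
        MonoidAlgebra.of F G (((List.finRange m).filter (· ∈ I)).map s).prod := by
    rw [map_list_prod, List.map_map]
    rfl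
  rw [prod_ofFn_rMatrix, Finset.sum_filter]
  simp only [of_subword, MonoidAlgebra.smul_of, MonoidAlgebra.coeff_sum, Finsupp.finsetSum_apply,
    MonoidAlgebra.coeff_single, Finsupp.single_apply]

end RMatrix

section CayleyEdge

variable {G A : Type*} [Monoid G] [Monoid A]

/-- An element `step` of `G` together with weights in `A`, `weight σ` being attached to the edge
`σ → σ * step` of the Cayley graph of `G`. Multiplication is concatenation of paths. This is a
wreath product of `A` and `G`; `RegularWreathProduct` would require `A` to be a group. -/
@[ext]
structure CayleyEdge (G A : Type*) where
  weight : G → A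
  step : G

namespace CayleyEdge

instance : Mul (CayleyEdge G A) where
  mul a b := ⟨fun σ => a.weight σ * b.weight (σ * a.step), a.step * b.step⟩

instance : One (CayleyEdge G A) where
  one := ⟨1, 1⟩

@[simp]
lemma weight_mul (a b : CayleyEdge G A) (σ : G) :
    (a * b).weight σ = a.weight σ * b.weight (σ * a.step) := rfl

@[simp]
lemma step_mul (a b : CayleyEdge G A) : (a * b).step = a.step * b.step := rfl

@[simp]
lemma weight_one (σ : G) : (1 : CayleyEdge G A).weight σ = 1 := rfl

@[simp]
lemma step_one : (1 : CayleyEdge G A).step = 1 := rfl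

instance : Monoid (CayleyEdge G A) where
  mul_assoc a b c := by ext <;> simp [mul_assoc]
  one_mul a := by ext <;> simp
  mul_one a := by ext <;> simp

/-- The projection to the group element joining the endpoints of a path. -/
@[simps]
def stepHom : CayleyEdge G A →* G where
  toFun := step
  map_one' := rfl
  map_mul' _ _ := rfl

lemma weight_prod_ofFn {m : ℕ} (b : Fin m → CayleyEdge G A) (σ : G) :
    (List.ofFn b).prod.weight σ =
      (List.ofFn fun i => (b i).weight
        (σ * ((List.ofFn fun j => (b j).step).take i).prod)).prod := by
  induction m generalizing σ with
  | zero => simp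
  | succ m ih => simp [List.ofFn_succ, ih, mul_assoc]

end CayleyEdge

end CayleyEdge

section YangBaxterEdge

variable {α F A : Type*} [DecidableEq α] [Field F] [Ring A] [Algebra F A]

/-- The transposition of `a` and `b`, with the edge `σ → σ * swap a b` weighted by the R-matrix
whose spectral parameter is the root `x_{σ a} - x_{σ b}`. -/
def rEdge (x : α → F) (ρ : Equiv.Perm α →* A) (a b : α) : CayleyEdge (Equiv.Perm α) A where
  weight σ := rMatrix (x (σ a) - x (σ b)) (ρ (Equiv.swap a b))
  step := Equiv.swap a b

variable (x : α → F) (ρ : Equiv.Perm α →* A)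

lemma rEdge_mul_self (hx : ∀ a b, 1 + (x a - x b) ≠ 0) (a b : α) :
    rEdge x ρ a b * rEdge x ρ a b = 1 := by
  ext σ
  · have hs : ρ (Equiv.swap a b) * ρ (Equiv.swap a b) = 1 := by
      rw [← map_mul, Equiv.swap_mul_self, map_one]
    simpa [rEdge] using
      rMatrix_mul_rMatrix_neg hs (hx (σ a) (σ b)) (by simpa using hx (σ b) (σ a))
  · simp [rEdge]

lemma rEdge_commute {a b c d : α} (h : [a, b, c, d].Nodup) :
    Commute (rEdge x ρ a b) (rEdge x ρ c d) := by
  have hst : Commute (Equiv.swap a b) (Equiv.swap c d) :=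
    (Equiv.Perm.disjoint_swap_swap h).commute
  obtain ⟨⟨-, hac, had⟩, ⟨hbc, hbd⟩, -⟩ :
      (a ≠ b ∧ a ≠ c ∧ a ≠ d) ∧ (b ≠ c ∧ b ≠ d) ∧ c ≠ d := by simpa using h
  ext1
  · funext σ
    simpa [rEdge, Equiv.swap_apply_of_ne_of_ne, hac, had, hbc, hbd, hac.symm, had.symm, hbc.symm,
      hbd.symm] using (rMatrix_commute _ _ (hst.map ρ)).eq
  · exact hst

lemma swap_braid {a b c : α} (hab : a ≠ b) (hbc : b ≠ c) (hac : a ≠ c) :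
    Equiv.swap a b * Equiv.swap b c * Equiv.swap a b =
      Equiv.swap b c * Equiv.swap a b * Equiv.swap b c := by
  rw [Equiv.swap_mul_swap_mul_swap hab hac, Equiv.swap_comm a b, Equiv.swap_comm b c,
    Equiv.swap_mul_swap_mul_swap hbc.symm hac.symm, Equiv.swap_comm]

lemma rEdge_braid {a b c : α} (hab : a ≠ b) (hbc : b ≠ c) (hac : a ≠ c) :
    rEdge x ρ a b * rEdge x ρ b c * rEdge x ρ a b =
      rEdge x ρ b c * rEdge x ρ a b * rEdge x ρ b c := by
  have hswap := swap_braid hab hbc hac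
  have hsq : ρ (Equiv.swap a b) * ρ (Equiv.swap a b) = ρ (Equiv.swap b c) * ρ (Equiv.swap b c) := by
    simp only [← map_mul, Equiv.swap_mul_self]
  have hbraid : ρ (Equiv.swap a b) * ρ (Equiv.swap b c) * ρ (Equiv.swap a b) =
      ρ (Equiv.swap b c) * ρ (Equiv.swap a b) * ρ (Equiv.swap b c) := by
    simp only [← map_mul, hswap]
  ext1
  · funext σ
    simpa [rEdge, Equiv.swap_apply_of_ne_of_ne, hab, hbc, hac, hab.symm, hbc.symm, hac.symm] using
      rMatrix_yangBaxter (x (σ a) - x (σ b)) (x (σ b) - x (σ c)) hsq hbraid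
  · exact hswap

lemma coxeterRelations_rEdge (hx : ∀ a b, 1 + (x a - x b) ≠ 0) {e : ℕ → α} {N : ℕ}
    (he : Set.InjOn e (Set.Iic N)) :
    CoxeterRelations (fun i => rEdge x ρ (e i) (e (i + 1))) N := by
  have hne {i j : ℕ} (hij : i < j) (hj : j ≤ N) : e i ≠ e j := fun h =>
    hij.ne (he (Set.mem_Iic.2 (by lia)) (Set.mem_Iic.2 hj) h)
  refine ⟨fun i _ => rEdge_mul_self x ρ hx _ _, fun i j hij hj => rEdge_commute x ρ ?_,
    fun i hi => rEdge_braid x ρ (hne (by lia) (by lia)) (hne (by lia) (by lia))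
      (hne (by lia) (by lia))⟩
  simp only [List.nodup_cons, List.mem_cons, List.not_mem_nil, or_false, not_or, List.nodup_nil,
    not_false_eq_true, and_true]
  refine ⟨⟨hne ?_ ?_, hne ?_ ?_, hne ?_ ?_⟩, ⟨hne ?_ ?_, hne ?_ ?_⟩, hne ?_ ?_⟩ <;> lia

end YangBaxterEdge

section Word

variable {F : Type*} [Field F]

/-- The root `β_i` of the word `q`, with the variables specialised to elements `x a` of a field. -/
def root (x : Fin n → F) (q : Fin m → Fin n) (hq : ∀ i, (q i : ℕ) + 1 < n) (i : Fin m) : F :=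
  x (partialProd q hq i (q i)) - x (partialProd q hq i ⟨(q i : ℕ) + 1, hq i⟩)

/-- The sum `ssmSum` with the variables specialised to elements `x a` of a field. -/
def subwordSum (x : Fin n → F) (q : Fin m → Fin n) (hq : ∀ i, (q i : ℕ) + 1 < n)
    (w : Equiv.Perm (Fin n)) : F :=
  ∑ I : Finset (Fin m) with subwordProd q hq I = w,
    (∏ i ∈ I, root x q hq i / (1 + root x q hq i)) * ∏ i ∈ Iᶜ, (1 + root x q hq i)⁻¹

/-- The path in the Cayley graph of `S_n` spelled by the word `q`. -/
def wordEdge {A : Type*} [Ring A] [Algebra F A] (x : Fin n → F) (ρ : Equiv.Perm (Fin n) →* A)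
    (q : Fin m → Fin n) (hq : ∀ i, (q i : ℕ) + 1 < n) : CayleyEdge (Equiv.Perm (Fin n)) A :=
  (List.ofFn fun i => rEdge x ρ (q i) ⟨(q i : ℕ) + 1, hq i⟩).prod

section Path

variable {A : Type*} [Ring A] [Algebra F A] (x : Fin n → F) (ρ : Equiv.Perm (Fin n) →* A)
  (q : Fin m → Fin n) (hq : ∀ i, (q i : ℕ) + 1 < n)

lemma step_wordEdge : (wordEdge x ρ q hq).step = wordProd q hq := by
  change CayleyEdge.stepHom _ = _
  rw [wordEdge, map_list_prod, List.map_ofFn]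
  rfl

lemma weight_wordEdge_one :
    (wordEdge x ρ q hq).weight 1 =
      (List.ofFn fun i => rMatrix (root x q hq i) (ρ (wordPerm q hq i))).prod := by
  rw [wordEdge, CayleyEdge.weight_prod_ofFn]
  simp only [one_mul]
  rfl

lemma wordEdge_mem_parabolic [NeZero n] :
    wordEdge x ρ q hq ∈
      parabolic (fun i => rEdge x ρ (Fin.ofNat n i) (Fin.ofNat n (i + 1))) (n - 1) := by
  refine Submonoid.list_prod_mem _ fun y hy => ?_
  obtain ⟨i, rfl⟩ := (List.mem_ofFn' _ _).1 hy
  have hlt := hq i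
  have hsucc : (⟨(q i : ℕ) + 1, hq i⟩ : Fin n) = Fin.ofNat n (q i + 1) :=
    Fin.ext (Nat.mod_eq_of_lt hlt).symm
  simpa [hsucc] using mem_parabolic
    (g := fun i => rEdge x ρ (Fin.ofNat n i) (Fin.ofNat n (i + 1))) (show (q i : ℕ) < n - 1 by lia)

end Path

lemma subwordSum_eq_coeff (x : Fin n → F) (q : Fin m → Fin n) (hq : ∀ i, (q i : ℕ) + 1 < n)
    (w : Equiv.Perm (Fin n)) :
    subwordSum x q hq w =
      ((wordEdge x (MonoidAlgebra.of F (Equiv.Perm (Fin n))) q hq).weight 1).coeff w := by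
  rw [weight_wordEdge_one, coeff_prod_ofFn_rMatrix_of]
  rfl

lemma wordEdge_eq_of_wordProd_eq [NeZero n] {A : Type*} [Ring A] [Algebra F A] {x : Fin n → F}
    (hx : ∀ a b, 1 + (x a - x b) ≠ 0) (ρ : Equiv.Perm (Fin n) →* A) {m' : ℕ}
    {q : Fin m → Fin n} {hq : ∀ i, (q i : ℕ) + 1 < n}
    {q' : Fin m' → Fin n} {hq' : ∀ i, (q' i : ℕ) + 1 < n}
    (h : wordProd q hq = wordProd q' hq') :
    wordEdge x ρ q hq = wordEdge x ρ q' hq' := by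
  have he : Set.InjOn (Fin.ofNat n) (Set.Iic (n - 1)) := by
    intro i (hi : i ≤ n - 1) j (hj : j ≤ n - 1) hij
    have hn := NeZero.pos n
    simpa [Nat.mod_eq_of_lt (show i < n by lia), Nat.mod_eq_of_lt (show j < n by lia)] using
      congrArg Fin.val hij
  refine (coxeterRelations_rEdge x ρ hx he).injOn_parabolic (φ := CayleyEdge.stepHom) he
    (fun _ _ => rfl) (wordEdge_mem_parabolic x ρ q hq) (wordEdge_mem_parabolic x ρ q' hq') ?_
  simpa only [CayleyEdge.stepHom_apply, step_wordEdge] using h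

end Word

theorem statement16_general {F : Type*} [Field F] {n m m' : ℕ} [NeZero n] {x : Fin n → F}
    (hx : ∀ a b, 1 + (x a - x b) ≠ 0)
    (q : Fin m → Fin n) (hq : ∀ i, (q i : ℕ) + 1 < n)
    (q' : Fin m' → Fin n) (hq' : ∀ i, (q' i : ℕ) + 1 < n)
    (h : wordProd q hq = wordProd q' hq') (w : Equiv.Perm (Fin n)) :
    subwordSum x q hq w = subwordSum x q' hq' w := by
  rw [subwordSum_eq_coeff, subwordSum_eq_coeff, wordEdge_eq_of_wordProd_eq hx _ h]

/-- The generic point: the variables `x_a` as elements of the field of rational functions. -/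
def genericPoint (n : ℕ) (a : Fin n) : FractionRing (MvPolynomial (Fin n) ℚ) :=
  algebraMap (MvPolynomial (Fin n) ℚ) _ (MvPolynomial.X a)

lemma one_add_genericPoint_sub_ne_zero (a b : Fin n) :
    1 + (genericPoint n a - genericPoint n b) ≠ 0 := by
  have hpoly : (1 + (MvPolynomial.X a - MvPolynomial.X b) : MvPolynomial (Fin n) ℚ) ≠ 0 :=
    fun h => by simpa using congrArg (MvPolynomial.eval 0) h
  simpa [genericPoint] using
    (map_ne_zero_iff _ (IsFractionRing.injective _ (FractionRing (MvPolynomial (Fin n) ℚ)))).2 hpoly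

lemma ssmSum_eq_subwordSum (q : Fin m → Fin n) (hq : ∀ i, (q i : ℕ) + 1 < n)
    (w : Equiv.Perm (Fin n)) : ssmSum q hq w = subwordSum (genericPoint n) q hq w := by
  simp only [ssmSum, subwordSum, betaF, beta, root, genericPoint, map_sub]

theorem statement16 {n : ℕ} (hn : 1 ≤ n) {m m' : ℕ}
    (q : Fin m → Fin n) (hq : ∀ i, (q i : ℕ) + 1 < n)
    (q' : Fin m' → Fin n) (hq' : ∀ i, (q' i : ℕ) + 1 < n)
    (v : Equiv.Perm (Fin n))
    (hv : wordProd q hq = v) (hv' : wordProd q' hq' = v)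
    (w : Equiv.Perm (Fin n)) :
    ssmSum q hq w = ssmSum q' hq' w := by
  have : NeZero n := ⟨by lia⟩
  rw [ssmSum_eq_subwordSum, ssmSum_eq_subwordSum,
    statement16_general one_add_genericPoint_sub_ne_zero q hq q' hq' (hv.trans hv'.symm)]

end AJSBilleySSM
end
end

section
/- Fix n ≥ 1, let v ∈ S_n, and let Q = (q₁,…,q_ℓ) and Q′ = (q′₁,…,q′_ℓ) be two reduced words for v (i.e., s_{q₁}⋯s_{q_ℓ} = v = s_{q′₁}⋯s_{q′_ℓ} with ℓ = ℓ(v) the number of inversions of v). Then for every w ∈ S_n, the polynomial Σ over subsets I ⊆ {1,…,ℓ} with Π_{i∈I} s_{q_i} = w (product in increasing order of i) of Π_{i∈I} β_i, computed from Q, equals the corresponding sum computed from Q′, as elements of ℤ[x₁,…,xₙ]. (Both equal the Chern–Schwartz–MacPherson class of the open Kazhdan–Lusztig variety X_w° ∩ X^v_° inside the cell X^v_°.) -/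
open scoped Classical

noncomputable section

namespace AJSBilleySSM

variable {n m : ℕ}

/-- The number of inversions (Coxeter length) of a permutation. -/
def invCount (w : Equiv.Perm (Fin n)) : ℕ :=
  (Finset.univ.filter (fun p : Fin n × Fin n => p.1 < p.2 ∧ w p.2 < w p.1)).card

/-- The CSM-class sum attached to a word `q` and `w`:
`Σ_{I ⊆ {1,…,ℓ} : Π_{i∈I} s_{q_i} = w} Π_{i∈I} β_i ∈ ℤ[x₁,…,xₙ]`. -/
def csmSum (q : Fin m → Fin n) (hq : ∀ i, (q i : ℕ) + 1 < n) (w : Equiv.Perm (Fin n)) :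
    MvPolynomial (Fin n) ℤ :=
  ∑ I ∈ Finset.univ.filter (fun I : Finset (Fin m) => subwordProd q hq I = w),
    ∏ i ∈ I, beta ℤ q hq i

/-!
By Matsumoto's argument, a function on pairs (permutation, ascent) with values in a monoid
integrates along the right weak order to a function on `S_n` as soon as it satisfies the
commutation and braid relations, because two descents of a permutation can always be completed to
a commuting square or a braid hexagon. The elements `1 + β s_k` of the group algebra, with `β` the
root of the ascent, satisfy the Yang–Baxter equation, which is the braid relation. Hence the
product of the `1 + β_i s_{q_i}` over a reduced word depends only on `v`, and expanding it shows
that its coefficient at `w` is the subword sum.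
-/

/-- The positions `k` of `Fin n` that have a successor, indexing the adjacent transpositions. -/
abbrev Letter (n : ℕ) : Type := {k : Fin n // (k : ℕ) + 1 < n}

namespace Letter

/-- The position `k + 1`. -/
def next (a : Letter n) : Fin n := ⟨(a.1 : ℕ) + 1, a.2⟩

/-- The adjacent transposition `s_k`. -/
def swap (a : Letter n) : Equiv.Perm (Fin n) := adjSwap a.1 a.2

variable {a b : Letter n}

lemma lt_next (a : Letter n) : a.1 < a.next := Nat.lt_succ_self _

lemma next_le_of_lt (hab : a.1 < b.1) : a.next ≤ b.1 := Nat.succ_le_of_lt hab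

lemma swap_apply_self (a : Letter n) : a.swap a.1 = a.next := Equiv.swap_apply_left _ _

lemma swap_apply_next (a : Letter n) : a.swap a.next = a.1 := Equiv.swap_apply_right _ _

lemma swap_apply_of_lt {x : Fin n} (hx : x < a.1) : a.swap x = x :=
  Equiv.swap_apply_of_ne_of_ne hx.ne (hx.trans a.lt_next).ne

lemma swap_apply_of_next_lt {x : Fin n} (hx : a.next < x) : a.swap x = x :=
  Equiv.swap_apply_of_ne_of_ne (a.lt_next.trans hx).ne' hx.ne'

lemma swap_apply_eq_of_next_eq (hab : a.next = b.1) : a.swap b.1 = a.1 :=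
  hab ▸ a.swap_apply_next

lemma swap_apply_left_of_next_eq (hab : a.next = b.1) : b.swap a.1 = a.1 :=
  swap_apply_of_lt (hab ▸ a.lt_next)

lemma swap_apply_right_of_next_eq (hab : a.next = b.1) : a.swap b.next = b.next :=
  swap_apply_of_next_lt (hab ▸ b.lt_next)

lemma swap_mul_self (a : Letter n) : a.swap * a.swap = 1 := Equiv.swap_mul_self _ _

lemma mul_swap_mul_swap (u : Equiv.Perm (Fin n)) (a : Letter n) : u * a.swap * a.swap = u :=
  Equiv.mul_swap_mul_self _ _ u

lemma swap_lt_swap_iff {x y : Fin n} (h : ¬(x = a.1 ∧ y = a.next))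
    (h' : ¬(x = a.next ∧ y = a.1)) : a.swap x < a.swap y ↔ x < y := by
  simp only [swap, next, adjSwap, Equiv.swap_apply_def, Fin.ext_iff, Fin.lt_def] at *
  split_ifs <;> simp_all <;> omega

lemma swap_mul_swap_comm (hab : a.next < b.1) : a.swap * b.swap = b.swap * a.swap := by
  change a.swap * Equiv.swap b.1 b.next = Equiv.swap b.1 b.next * a.swap
  rw [Equiv.mul_swap_eq_swap_mul, swap_apply_of_next_lt hab,
    swap_apply_of_next_lt (hab.trans b.lt_next)]

lemma swap_mul_swap_mul_swap (hab : a.next = b.1) :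
    a.swap * b.swap * a.swap = b.swap * a.swap * b.swap := by
  have ha : a.swap = Equiv.swap a.1 b.1 := hab ▸ rfl
  have hb : b.swap = Equiv.swap b.1 b.next := rfl
  have hab' : a.1 < b.1 := hab ▸ a.lt_next
  have hab'' : a.1 < b.next := hab'.trans b.lt_next
  calc a.swap * b.swap * a.swap = Equiv.swap a.1 b.next := by
        rw [ha, hb, Equiv.swap_comm a.1, Equiv.swap_comm b.1 b.next,
          Equiv.swap_mul_swap_mul_swap b.lt_next.ne' hab''.ne']
    _ = b.swap * a.swap * b.swap := by
        rw [ha, hb, Equiv.swap_mul_swap_mul_swap hab'.ne hab''.ne, Equiv.swap_comm]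

end Letter

/-- `u` has an ascent at position `k`: right multiplication by `s_k` lengthens `u`. -/
def IsAscent (u : Equiv.Perm (Fin n)) (a : Letter n) : Prop := u a.1 < u a.next

section Length

variable {u : Equiv.Perm (Fin n)} {a b : Letter n}

lemma isAscent_mul_swap_self : IsAscent (u * a.swap) a ↔ ¬IsAscent u a := by
  simp only [IsAscent, Equiv.Perm.mul_apply, a.swap_apply_self, a.swap_apply_next, not_lt]
  exact (u.injective.ne a.lt_next.ne').le_iff_lt.symm

lemma isAscent_one (a : Letter n) : IsAscent 1 a := a.lt_next

lemma isAscent_mul_swap_right_iff_of_next_lt (hab : a.next < b.1) :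
    IsAscent (u * a.swap) b ↔ IsAscent u b := by
  simp only [IsAscent, Equiv.Perm.mul_apply, Letter.swap_apply_of_next_lt hab,
    Letter.swap_apply_of_next_lt (hab.trans b.lt_next)]

lemma isAscent_mul_swap_left_iff_of_next_lt (hab : a.next < b.1) :
    IsAscent (u * b.swap) a ↔ IsAscent u a := by
  simp only [IsAscent, Equiv.Perm.mul_apply, Letter.swap_apply_of_lt hab,
    Letter.swap_apply_of_lt (a.lt_next.trans hab)]

lemma isAscent_mul_swap_mul_swap_left_iff_of_next_eq (hab : a.next = b.1) :
    IsAscent (u * a.swap * b.swap) a ↔ IsAscent u b := by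
  simp only [IsAscent, Equiv.Perm.mul_apply, hab, a.swap_apply_self, b.swap_apply_self,
    Letter.swap_apply_left_of_next_eq hab, Letter.swap_apply_right_of_next_eq hab]

lemma isAscent_mul_swap_mul_swap_right_iff_of_next_eq (hab : a.next = b.1) :
    IsAscent (u * b.swap * a.swap) b ↔ IsAscent u a := by
  simp only [IsAscent, Equiv.Perm.mul_apply, hab, b.swap_apply_next,
    Letter.swap_apply_eq_of_next_eq hab, Letter.swap_apply_left_of_next_eq hab,
    Letter.swap_apply_right_of_next_eq hab]

lemma IsAscent.mul_swap_right_of_next_eq (hab : a.next = b.1) (ha : IsAscent u a)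
    (hb : IsAscent u b) : IsAscent (u * a.swap) b := by
  simpa only [IsAscent, Equiv.Perm.mul_apply, Letter.swap_apply_eq_of_next_eq hab,
    Letter.swap_apply_right_of_next_eq hab] using ha.trans (hab ▸ hb)

lemma IsAscent.mul_swap_left_of_next_eq (hab : a.next = b.1) (ha : IsAscent u a)
    (hb : IsAscent u b) : IsAscent (u * b.swap) a := by
  simpa only [IsAscent, Equiv.Perm.mul_apply, hab, b.swap_apply_self,
    Letter.swap_apply_left_of_next_eq hab] using ha.trans (hab ▸ hb)

/-- The set counted by `invCount`. -/
def inversions (u : Equiv.Perm (Fin n)) : Finset (Fin n × Fin n) :=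
  Finset.univ.filter fun p => p.1 < p.2 ∧ u p.2 < u p.1

lemma mem_inversions {x y : Fin n} : (x, y) ∈ inversions u ↔ x < y ∧ u y < u x := by
  simp [inversions]

lemma mem_inversions_map_swap {x y : Fin n} :
    (x, y) ∈ (inversions u).map (a.swap.prodCongr a.swap).toEmbedding ↔
      a.swap x < a.swap y ∧ u (a.swap y) < u (a.swap x) := by
  rw [Finset.mem_map_equiv, ← mem_inversions]
  rfl

lemma inversions_mul_swap (hu : IsAscent u a) :
    inversions (u * a.swap) =
      insert (a.1, a.next) ((inversions u).map (a.swap.prodCongr a.swap).toEmbedding) := by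
  ext ⟨x, y⟩
  rw [Finset.mem_insert, Prod.mk.injEq, mem_inversions, mem_inversions_map_swap,
    Equiv.Perm.mul_apply, Equiv.Perm.mul_apply]
  by_cases h : x = a.1 ∧ y = a.next
  · obtain ⟨rfl, rfl⟩ := h
    simpa only [IsAscent, a.swap_apply_self, a.swap_apply_next, a.lt_next, true_and,
      and_self, true_or, iff_true] using hu
  by_cases h' : x = a.next ∧ y = a.1
  · obtain ⟨rfl, rfl⟩ := h'
    simp [a.swap_apply_self, a.swap_apply_next, a.lt_next.ne', hu.le]
  · simp only [h, false_or, Letter.swap_lt_swap_iff h h']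

lemma IsAscent.invCount_mul_swap (hu : IsAscent u a) :
    invCount (u * a.swap) = invCount u + 1 := by
  have hnotMem : (a.1, a.next) ∉ (inversions u).map (a.swap.prodCongr a.swap).toEmbedding := by
    rw [mem_inversions_map_swap, a.swap_apply_self, a.swap_apply_next]
    exact fun h => a.lt_next.not_gt h.1
  calc invCount (u * a.swap) = (inversions (u * a.swap)).card := rfl
    _ = (inversions u).card + 1 := by
      rw [inversions_mul_swap hu, Finset.card_insert_of_notMem hnotMem, Finset.card_map]

lemma invCount_mul_swap_of_not_isAscent (hu : ¬IsAscent u a) :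
    invCount (u * a.swap) + 1 = invCount u := by
  have h := (isAscent_mul_swap_self.2 hu).invCount_mul_swap
  rwa [a.mul_swap_mul_swap, eq_comm] at h

lemma invCount_one : invCount (1 : Equiv.Perm (Fin n)) = 0 :=
  Finset.card_eq_zero.2 <| Finset.filter_eq_empty_iff.2 fun _ _ h => h.1.not_gt h.2

end Length

section Potential

variable {A : Type*} [Monoid A]

/-- The commutation and braid relations for a function `F` on the edges `u → u s_k` of the right
weak order: the products of `F` along the two sides of a square or of a hexagon agree. -/
structure IsBraidCocycle (F : Equiv.Perm (Fin n) → Letter n → A) : Prop where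
  comm : ∀ t (a b : Letter n), a.next < b.1 →
    F t a * F (t * a.swap) b = F t b * F (t * b.swap) a
  braid : ∀ t (a b : Letter n), a.next = b.1 →
    F t a * F (t * a.swap) b * F (t * a.swap * b.swap) a =
      F t b * F (t * b.swap) a * F (t * b.swap * a.swap) b

/-- `P` integrates `F` along the edges of the right weak order ending in length less than `N`. -/
def IsPotentialBelow (F : Equiv.Perm (Fin n) → Letter n → A) (P : Equiv.Perm (Fin n) → A)
    (N : ℕ) : Prop :=
  ∀ u a, IsAscent u a → invCount (u * a.swap) < N → P (u * a.swap) = P u * F u a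

variable {F : Equiv.Perm (Fin n) → Letter n → A} {P : Equiv.Perm (Fin n) → A} {N : ℕ}
  {t u u' : Equiv.Perm (Fin n)} {a b : Letter n}

lemma IsBraidCocycle.mul_eq_mul_of_next_lt (hF : IsBraidCocycle F) (hP : IsPotentialBelow F P N)
    (hab : a.next < b.1) (ha : IsAscent t a) (hb : IsAscent t b) (hN : invCount t + 1 < N) :
    P (t * b.swap) * F (t * b.swap) a = P (t * a.swap) * F (t * a.swap) b := by
  rw [hP t a ha (by rwa [ha.invCount_mul_swap]), hP t b hb (by rwa [hb.invCount_mul_swap]),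
    mul_assoc, mul_assoc, hF.comm t a b hab]

lemma IsBraidCocycle.mul_eq_mul_of_next_eq (hF : IsBraidCocycle F) (hP : IsPotentialBelow F P N)
    (hab : a.next = b.1) (ha : IsAscent t a) (hb : IsAscent t b) (hN : invCount t + 2 < N) :
    P (t * a.swap * b.swap) * F (t * a.swap * b.swap) a =
      P (t * b.swap * a.swap) * F (t * b.swap * a.swap) b := by
  have ha' : IsAscent (t * b.swap) a := ha.mul_swap_left_of_next_eq hab hb
  have hb' : IsAscent (t * a.swap) b := ha.mul_swap_right_of_next_eq hab hb
  have la := ha.invCount_mul_swap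
  have lb := hb.invCount_mul_swap
  rw [hP _ b hb' (by rw [hb'.invCount_mul_swap]; lia), hP t a ha (by lia),
    hP _ a ha' (by rw [ha'.invCount_mul_swap]; lia), hP t b hb (by lia)]
  simpa only [mul_assoc] using congrArg (P t * ·) (hF.braid t a b hab)

/-- Two distinct edges into the same vertex are the last edges of the two sides of a square or
hexagon. -/
lemma IsBraidCocycle.mul_eq_mul_of_le (hF : IsBraidCocycle F) (hP : IsPotentialBelow F P N)
    (hab : a.1 ≤ b.1) (hu : IsAscent u a) (hu' : IsAscent u' b)
    (h : u * a.swap = u' * b.swap) (hN : invCount (u * a.swap) ≤ N) :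
    P u * F u a = P u' * F u' b := by
  rcases hab.eq_or_lt with hab | hab
  · obtain rfl : a = b := Subtype.ext hab
    rw [mul_right_cancel h]
  obtain rfl : u' = u * a.swap * b.swap := by rw [h, b.mul_swap_mul_swap]
  rcases (Letter.next_le_of_lt hab).eq_or_lt with hab | hab
  · obtain ⟨t, rfl⟩ : ∃ t, u = t * a.swap * b.swap :=
      ⟨u * b.swap * a.swap, by rw [a.mul_swap_mul_swap, b.mul_swap_mul_swap]⟩
    have htb : t * a.swap * b.swap * a.swap * b.swap = t * b.swap * a.swap := by
      rw [mul_assoc t, mul_assoc t, Letter.swap_mul_swap_mul_swap hab, ← mul_assoc, ← mul_assoc,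
        b.mul_swap_mul_swap]
    rw [htb] at hu' ⊢
    have ha : IsAscent t a := (isAscent_mul_swap_mul_swap_right_iff_of_next_eq hab).1 hu'
    have hb : IsAscent t b := (isAscent_mul_swap_mul_swap_left_iff_of_next_eq hab).1 hu
    rw [hu.invCount_mul_swap, (ha.mul_swap_right_of_next_eq hab hb).invCount_mul_swap,
      ha.invCount_mul_swap] at hN
    exact hF.mul_eq_mul_of_next_eq hP hab ha hb (by lia)
  · obtain ⟨t, rfl⟩ : ∃ t, u = t * b.swap := ⟨u * b.swap, (b.mul_swap_mul_swap u).symm⟩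
    have hta : t * b.swap * a.swap * b.swap = t * a.swap := by
      rw [mul_assoc t, ← Letter.swap_mul_swap_comm hab, ← mul_assoc, b.mul_swap_mul_swap]
    rw [hta] at hu' ⊢
    have ha : IsAscent t a := (isAscent_mul_swap_left_iff_of_next_lt hab).1 hu
    have hb : IsAscent t b := (isAscent_mul_swap_right_iff_of_next_lt hab).1 hu'
    rw [hu.invCount_mul_swap, hb.invCount_mul_swap] at hN
    exact hF.mul_eq_mul_of_next_lt hP hab ha hb (by lia)

lemma IsBraidCocycle.mul_eq_mul_of_mul_swap_eq (hF : IsBraidCocycle F)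
    (hP : IsPotentialBelow F P N) (hu : IsAscent u a) (hu' : IsAscent u' b)
    (h : u * a.swap = u' * b.swap) (hN : invCount (u * a.swap) ≤ N) :
    P u * F u a = P u' * F u' b := by
  rcases le_total a.1 b.1 with hab | hab
  · exact hF.mul_eq_mul_of_le hP hab hu hu' h hN
  · exact (hF.mul_eq_mul_of_le hP hab hu' hu h.symm (h ▸ hN)).symm

/-- The product of `F` along a path from a permutation without descents to `v` in the right weak
order, the path being built downwards from `v` by choosing descents. -/
def potential (F : Equiv.Perm (Fin n) → Letter n → A) (v : Equiv.Perm (Fin n)) : A :=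
  if h : ∃ a, ¬IsAscent v a then
    potential F (v * h.choose.swap) * F (v * h.choose.swap) h.choose
  else 1
termination_by invCount v
decreasing_by exact Nat.lt_of_succ_le (invCount_mul_swap_of_not_isAscent h.choose_spec).le

lemma potential_one (F : Equiv.Perm (Fin n) → Letter n → A) : potential F 1 = 1 := by
  rw [potential, dif_neg (by simpa only [not_exists, not_not] using isAscent_one)]

lemma exists_potential_eq_mul (F : Equiv.Perm (Fin n) → Letter n → A)
    (h : ∃ a, ¬IsAscent u a) :
    ∃ a, ¬IsAscent u a ∧ potential F u = potential F (u * a.swap) * F (u * a.swap) a :=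
  ⟨h.choose, h.choose_spec, by rw [potential, dif_pos h]⟩

lemma IsBraidCocycle.isPotentialBelow_potential (hF : IsBraidCocycle F) (N : ℕ) :
    IsPotentialBelow F (potential F) N := by
  induction N with
  | zero => exact fun _ _ _ h => absurd h (Nat.not_lt_zero _)
  | succ N ih =>
    intro u a hu hN
    have hdesc : ¬IsAscent (u * a.swap) a := by
      rwa [isAscent_mul_swap_self, not_not]
    obtain ⟨b, hb, hpot⟩ := exists_potential_eq_mul F ⟨a, hdesc⟩
    rw [hpot]
    exact (hF.mul_eq_mul_of_mul_swap_eq ih hu (isAscent_mul_swap_self.2 hb)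
      (b.mul_swap_mul_swap _).symm (Nat.le_of_lt_succ hN)).symm

/-- Matsumoto's theorem for the symmetric group, in the form of path independence. -/
theorem IsBraidCocycle.potential_mul_swap (hF : IsBraidCocycle F) (hu : IsAscent u a) :
    potential F (u * a.swap) = potential F u * F u a :=
  hF.isPotentialBelow_potential _ u a hu (Nat.lt_succ_self _)

end Potential

section ReducedWord

variable (q : Fin m → Fin n) (hq : ∀ i, (q i : ℕ) + 1 < n)

/-- The `i`-th letter of the word `q`. -/
def letter (i : Fin m) : Letter n := ⟨q i, hq i⟩

lemma partialProd_zero : partialProd q hq 0 = 1 := by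
  rw [partialProd, List.take_zero, List.prod_nil]

lemma partialProd_eq_wordProd : partialProd q hq m = wordProd q hq := by
  rw [partialProd, List.take_of_length_le (List.length_ofFn).le, wordProd]

lemma partialProd_succ {k : ℕ} (hk : k < m) :
    partialProd q hq (k + 1) = partialProd q hq k * (letter q hq ⟨k, hk⟩).swap := by
  rw [partialProd, List.prod_take_succ _ _ (by rwa [List.length_ofFn]), List.getElem_ofFn]
  rfl

lemma invCount_mul_swap_le (u : Equiv.Perm (Fin n)) (a : Letter n) :
    invCount (u * a.swap) ≤ invCount u + 1 := by
  by_cases hu : IsAscent u a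
  · exact hu.invCount_mul_swap.le
  · have := invCount_mul_swap_of_not_isAscent hu
    lia

lemma invCount_partialProd_le {k : ℕ} (hk : k ≤ m) : invCount (partialProd q hq k) ≤ k := by
  induction k with
  | zero => rw [partialProd_zero, invCount_one]
  | succ k ih =>
    rw [partialProd_succ q hq hk]
    exact (invCount_mul_swap_le _ _).trans (Nat.succ_le_succ (ih (Nat.le_of_succ_le hk)))

variable {q hq}

lemma invCount_partialProd (hred : m = invCount (wordProd q hq)) {k : ℕ} (hk : k ≤ m) :
    invCount (partialProd q hq k) = k := by
  induction hk using Nat.decreasingInduction with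
  | self => rw [partialProd_eq_wordProd, ← hred]
  | of_succ k hk ih =>
    have hstep := invCount_mul_swap_le (partialProd q hq k) (letter q hq ⟨k, hk⟩)
    rw [← partialProd_succ, ih] at hstep
    exact (invCount_partialProd_le q hq hk.le).antisymm (Nat.le_of_succ_le_succ hstep)

lemma isAscent_partialProd (hred : m = invCount (wordProd q hq)) (i : Fin m) :
    IsAscent (partialProd q hq i) (letter q hq i) := by
  by_contra hdesc
  have h := invCount_mul_swap_of_not_isAscent hdesc
  rw [← partialProd_succ, invCount_partialProd hred i.2, invCount_partialProd hred i.2.le] at h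
  lia

theorem IsBraidCocycle.prod_ofFn_eq_potential {A : Type*} [Monoid A]
    {F : Equiv.Perm (Fin n) → Letter n → A} (hF : IsBraidCocycle F)
    (hred : m = invCount (wordProd q hq)) :
    (List.ofFn fun i => F (partialProd q hq i) (letter q hq i)).prod =
      potential F (wordProd q hq) := by
  set L := List.ofFn fun i : Fin m => F (partialProd q hq i) (letter q hq i) with hL
  have hlen : L.length = m := List.length_ofFn
  have htake : ∀ k ≤ m, (L.take k).prod = potential F (partialProd q hq k) := by
    intro k hk
    induction k with
    | zero => rw [List.take_zero, List.prod_nil, partialProd_zero, potential_one]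
    | succ k ih =>
      rw [List.prod_take_succ L k (hlen.symm ▸ hk), ih (Nat.le_of_succ_le hk),
        partialProd_succ q hq hk, hF.potential_mul_swap (isAscent_partialProd hred ⟨k, hk⟩)]
      simp only [hL, List.getElem_ofFn]
  rw [← partialProd_eq_wordProd, ← htake m le_rfl, List.take_of_length_le hlen.le]

end ReducedWord

section YangBaxter

variable {R : Type*} [CommRing R]

lemma yang_baxter {A : Type*} [Ring A] [Algebra R A] {S T : A} (hS : S * S = 1) (hT : T * T = 1)
    (hST : S * T * S = T * S * T) (a b : R) :
    (1 + a • S) * (1 + (a + b) • T) * (1 + b • S) =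
      (1 + b • T) * (1 + (a + b) • S) * (1 + a • T) := by
  simp only [mul_add, add_mul, one_mul, mul_one, smul_mul_assoc, mul_smul_comm, hS, hT, hST]
  module

/-- The factor `1 + (x_{u(k)} - x_{u(k+1)}) s_k` in the group algebra of `S_n`. -/
def rootFactor (x : Fin n → R) (u : Equiv.Perm (Fin n)) (a : Letter n) :
    MonoidAlgebra R (Equiv.Perm (Fin n)) :=
  1 + (x (u a.1) - x (u a.next)) • MonoidAlgebra.of R _ a.swap

theorem isBraidCocycle_rootFactor (x : Fin n → R) : IsBraidCocycle (rootFactor x) where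
  comm t a b hab := by
    have hcomm : Commute (MonoidAlgebra.of R _ a.swap) (MonoidAlgebra.of R _ b.swap) :=
      Commute.map (Letter.swap_mul_swap_comm hab : Commute a.swap b.swap) (MonoidAlgebra.of R _)
    simp only [rootFactor, Equiv.Perm.mul_apply, Letter.swap_apply_of_next_lt hab,
      Letter.swap_apply_of_next_lt (hab.trans b.lt_next),
      Letter.swap_apply_of_lt (a.lt_next.trans hab), Letter.swap_apply_of_lt hab]
    exact (Commute.one_right _).add_right
      ((Commute.one_left _).add_left ((hcomm.smul_left _).smul_right _))
  braid t a b hab := by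
    have hsq : ∀ c : Letter n, MonoidAlgebra.of R _ c.swap * MonoidAlgebra.of R _ c.swap = 1 :=
      fun c => by rw [← map_mul, c.swap_mul_self, map_one]
    have hbraid : MonoidAlgebra.of R _ a.swap * MonoidAlgebra.of R _ b.swap *
        MonoidAlgebra.of R _ a.swap = MonoidAlgebra.of R _ b.swap * MonoidAlgebra.of R _ a.swap *
        MonoidAlgebra.of R _ b.swap := by
      simp only [← map_mul, Letter.swap_mul_swap_mul_swap hab]
    have hYB :=
      yang_baxter (hsq a) (hsq b) hbraid (x (t a.1) - x (t b.1)) (x (t b.1) - x (t b.next))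
    rw [sub_add_sub_cancel] at hYB
    simpa only [rootFactor, Equiv.Perm.mul_apply, hab, a.swap_apply_self, b.swap_apply_self,
      b.swap_apply_next, Letter.swap_apply_eq_of_next_eq hab,
      Letter.swap_apply_left_of_next_eq hab, Letter.swap_apply_right_of_next_eq hab] using hYB

end YangBaxter

section Expansion

lemma prod_map_one_add {ι A : Type*} [DecidableEq ι] [Semiring A] (x : ι → A) {L : List ι}
    (hL : L.Nodup) :
    (L.map fun i => 1 + x i).prod =
      ∑ I ∈ L.toFinset.powerset, ((L.filter fun i => decide (i ∈ I)).map x).prod := by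
  induction L with
  | nil => simp
  | cons a L ih =>
    obtain ⟨haL, hL⟩ := List.nodup_cons.1 hL
    have ha : a ∉ L.toFinset := by rwa [List.mem_toFinset]
    rw [List.toFinset_cons, Finset.sum_powerset_insert ha, List.map_cons, List.prod_cons, ih hL,
      add_mul, one_mul, Finset.mul_sum]
    congr 1
    · refine Finset.sum_congr rfl fun I hI => ?_
      have haI : a ∉ I := fun h => ha (Finset.mem_powerset.1 hI h)
      rw [List.filter_cons_of_neg (by simpa using haI)]
    · refine Finset.sum_congr rfl fun I _ => ?_
      rw [List.filter_cons_of_pos (by simp), List.map_cons, List.prod_cons]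
      congr 3
      refine List.filter_congr fun i hi => ?_
      have hia : i ≠ a := ne_of_mem_of_not_mem hi haL
      simp only [Finset.mem_insert, hia, false_or]

lemma prod_map_single {ι G R : Type*} [Monoid G] [Semiring R] (g : ι → G) (r : ι → R)
    (L : List ι) :
    (L.map fun i => MonoidAlgebra.single (g i) (r i)).prod =
      MonoidAlgebra.single (L.map g).prod (L.map r).prod := by
  induction L with
  | nil => rfl
  | cons i L ih => simp only [List.map_cons, List.prod_cons, ih, MonoidAlgebra.single_mul_single]

lemma prod_map_filter_finRange {M : Type*} [CommMonoid M] (I : Finset (Fin m)) (f : Fin m → M) :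
    (((List.finRange m).filter fun i => decide (i ∈ I)).map f).prod = ∏ i ∈ I, f i := by
  rw [← List.prod_toFinset f ((List.nodup_finRange m).filter _), List.toFinset_filter,
    List.toFinset_finRange]
  simp

lemma csmSum_eq_coeff (q : Fin m → Fin n) (hq : ∀ i, (q i : ℕ) + 1 < n) (w : Equiv.Perm (Fin n)) :
    csmSum q hq w = (List.ofFn fun i : Fin m =>
      rootFactor (MvPolynomial.X (R := ℤ)) (partialProd q hq i) (letter q hq i)).prod.coeff w := by
  have hfactor : ∀ i : Fin m,
      rootFactor (MvPolynomial.X (R := ℤ)) (partialProd q hq i) (letter q hq i) =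
        1 + MonoidAlgebra.single (wordPerm q hq i) (beta ℤ q hq i) :=
    fun i => congrArg (1 + ·) (MonoidAlgebra.smul_of _ _)
  simp only [hfactor, List.ofFn_eq_map, prod_map_one_add _ (List.nodup_finRange m),
    prod_map_single, prod_map_filter_finRange, List.toFinset_finRange, Finset.powerset_univ,
    MonoidAlgebra.coeff_sum, Finsupp.finsetSum_apply, MonoidAlgebra.coeff_single,
    Finsupp.single_apply]
  rw [csmSum, Finset.sum_filter]
  rfl

end Expansion

theorem statement17 {n : ℕ} (hn : 1 ≤ n) (v : Equiv.Perm (Fin n)) {l : ℕ}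
    (q : Fin l → Fin n) (hq : ∀ i, (q i : ℕ) + 1 < n)
    (q' : Fin l → Fin n) (hq' : ∀ i, (q' i : ℕ) + 1 < n)
    (hv : wordProd q hq = v) (hv' : wordProd q' hq' = v)
    (hred : l = invCount v)
    (w : Equiv.Perm (Fin n)) :
    csmSum q hq w = csmSum q' hq' w := by
  subst hv
  have hF := isBraidCocycle_rootFactor (MvPolynomial.X (R := ℤ) (σ := Fin n))
  rw [csmSum_eq_coeff, csmSum_eq_coeff, hF.prod_ofFn_eq_potential hred,
    hF.prod_ofFn_eq_potential (hv'.symm ▸ hred), hv']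

end AJSBilleySSM
end
end
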